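/- arXiv:1810.05545 — 3 statements merged into one kernel-verified Lean document; each statement's English description precedes it below -/
import Mathlib

section
/- Let A = (L_1,L_2,L_3,L_4) encode a (4,1) valise adinkra, and for I ≠ J let P_{IJ} denote the entrywise absolute value of the matrix L_Iᵀ·L_J. Then P_{12} = P_{34}, P_{13} = P_{24}, and P_{14} = P_{23}; the four matrices 1, P_{12}, P_{13}, P_{14} are pairwise distinct; P_{IJ}·P_{IJ} = 1 for all I ≠ J; and P_{12}·P_{13} = P_{14}, P_{13}·P_{14} = P_{12}, P_{12}·P_{14} = P_{13}. In particular, {1, P_{12}, P_{13}, P_{14}} is a group under matrix multiplication isomorphic to the Klein four-group. -/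
open Matrix

/-- A signed permutation matrix: exactly one nonzero entry in each row and column,
that entry being `1` or `-1`. -/
def IsSignedPerm {n : ℕ} (M : Matrix (Fin n) (Fin n) ℤ) : Prop :=
  (∀ i j, M i j = 0 ∨ M i j = 1 ∨ M i j = -1) ∧
  (∀ i, ∃! j, M i j ≠ 0) ∧
  (∀ j, ∃! i, M i j ≠ 0)

/-- The garden algebra relations for a family of `d × d` integer matrices. -/
def GardenRel {d N : ℕ} (L : Fin N → Matrix (Fin d) (Fin d) ℤ) : Prop :=
  ∀ I J : Fin N,
    (L I * (L J)ᵀ + L J * (L I)ᵀ =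
      if I = J then (2 : ℤ) • (1 : Matrix (Fin d) (Fin d) ℤ) else 0) ∧
    ((L I)ᵀ * L J + (L J)ᵀ * L I =
      if I = J then (2 : ℤ) • (1 : Matrix (Fin d) (Fin d) ℤ) else 0)

/-- The L-matrices of a (4,1) valise adinkra: a quadruple of 4×4 integer signed
permutation matrices satisfying the garden algebra relations. -/
def IsAdinkra (L : Fin 4 → Matrix (Fin 4) (Fin 4) ℤ) : Prop :=
  (∀ I, IsSignedPerm (L I)) ∧ GardenRel L

/-- Entrywise absolute value of an integer matrix. -/
def entrywiseAbs {n : ℕ} (M : Matrix (Fin n) (Fin n) ℤ) : Matrix (Fin n) (Fin n) ℤ :=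
  Matrix.of fun i j => |M i j|

/-!
Since `|·|` is multiplicative on signed permutation matrices, the matrices `P I J = |(L I)ᵀ * L J|`
satisfy `P I J * P J K = P I K` and `P I I = 1`, and antisymmetry of `(L I)ᵀ * L J` makes `P`
symmetric in `I, J` and `P I J` free of diagonal entries for `I ≠ J`. The latter also shows that the
nonzero entries of distinct `L J` never overlap, so four of them tile the `4 × 4` square, and
`∑ J, P I J` is the all-ones matrix whatever `I` is. Adding these relations for `I = 0, 1` and
subtracting those for `I = 2, 3` leaves `2 P 0 1 = 2 P 2 3`, and likewise for the other two
splittings of the four colors. The Klein multiplication table follows: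
`P 0 1 * P 0 2 = P 1 0 * P 0 2 = P 1 2 = P 0 3`.
-/

theorem entrywiseAbs_one {n : ℕ} : entrywiseAbs (1 : Matrix (Fin n) (Fin n) ℤ) = 1 := by
  ext i j
  by_cases hij : i = j <;> simp [entrywiseAbs, Matrix.one_apply, hij]

theorem entrywiseAbs_neg {n : ℕ} (M : Matrix (Fin n) (Fin n) ℤ) :
    entrywiseAbs (-M) = entrywiseAbs M := by
  ext i j
  exact abs_neg (M i j)

namespace IsSignedPerm

variable {n : ℕ} {M : Matrix (Fin n) (Fin n) ℤ}

theorem abs_apply_of_ne_zero (hM : IsSignedPerm M) {i j : Fin n} (hij : M i j ≠ 0) :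
    |M i j| = 1 := by
  rcases hM.1 i j with h | h | h
  · exact absurd h hij
  all_goals simp [h]

theorem exists_apply_ne_zero_forall_ne (hM : IsSignedPerm M) (j : Fin n) :
    ∃ i, M i j ≠ 0 ∧ ∀ k ≠ i, M k j = 0 := by
  obtain ⟨i, hi, hunique⟩ := hM.2.2 j
  exact ⟨i, hi, fun k hk => by_contra fun h => hk (hunique k h)⟩

theorem sum_abs_apply (hM : IsSignedPerm M) (j : Fin n) : ∑ i, |M i j| = 1 := by
  obtain ⟨i, hi, hzero⟩ := hM.exists_apply_ne_zero_forall_ne j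
  rw [Fintype.sum_eq_single i fun k hk => by rw [hzero k hk, abs_zero],
    hM.abs_apply_of_ne_zero hi]

theorem entrywiseAbs_transpose_mul (hM : IsSignedPerm M) (N : Matrix (Fin n) (Fin n) ℤ) :
    entrywiseAbs (Mᵀ * N) = (entrywiseAbs M)ᵀ * entrywiseAbs N := by
  ext a b
  obtain ⟨i, -, hzero⟩ := hM.exists_apply_ne_zero_forall_ne a
  simp only [entrywiseAbs, Matrix.of_apply, Matrix.mul_apply, Matrix.transpose_apply]
  rw [Fintype.sum_eq_single i fun k hk => by rw [hzero k hk, zero_mul],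
    Fintype.sum_eq_single i fun k hk => by rw [hzero k hk, abs_zero, zero_mul], abs_mul]

end IsSignedPerm

namespace GardenRel

variable {d N : ℕ} {L : Fin N → Matrix (Fin d) (Fin d) ℤ}

theorem transpose_mul_self (hL : GardenRel L) (I : Fin N) : (L I)ᵀ * L I = 1 := by
  have htwo := (hL I I).2
  rw [if_pos rfl, ← two_smul ℤ] at htwo
  exact smul_right_injective _ two_ne_zero htwo

theorem transpose_mul_eq_neg (hL : GardenRel L) {I J : Fin N} (hIJ : I ≠ J) :
    (L I)ᵀ * L J = -((L J)ᵀ * L I) :=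
  eq_neg_of_add_eq_zero_left ((hL I J).2.trans (if_neg hIJ))

theorem transpose_mul_apply_self (hL : GardenRel L) {I J : Fin N} (hIJ : I ≠ J) (i : Fin d) :
    ((L I)ᵀ * L J) i i = 0 := by
  have hneg : ((L I)ᵀ * L J) i i = -((L J)ᵀ * L I) i i :=
    congrFun (congrFun (hL.transpose_mul_eq_neg hIJ) i) i
  have hswap : ((L J)ᵀ * L I) i i = ((L I)ᵀ * L J) i i := by
    simp only [Matrix.mul_apply, Matrix.transpose_apply, mul_comm]
  lia

theorem apply_eq_zero_of_ne (hL : GardenRel L) {I J : Fin N} (hI : IsSignedPerm (L I))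
    (hIJ : I ≠ J) {i j : Fin d} (hij : L I i j ≠ 0) : L J i j = 0 := by
  obtain ⟨k, -, hzero⟩ := hI.exists_apply_ne_zero_forall_ne j
  obtain rfl : i = k := by_contra fun h => hij (hzero i h)
  have hdiag := hL.transpose_mul_apply_self hIJ j
  rw [Matrix.mul_apply, Fintype.sum_eq_single i fun k hk => by
    rw [Matrix.transpose_apply, hzero k hk, zero_mul]] at hdiag
  exact (mul_eq_zero.mp hdiag).resolve_left hij

theorem sum_entrywiseAbs {L : Fin d → Matrix (Fin d) (Fin d) ℤ} (hL : GardenRel L)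
    (hS : ∀ I, IsSignedPerm (L I)) : ∑ J, entrywiseAbs (L J) = Matrix.of fun _ _ => 1 := by
  ext i j
  choose row hrow _ using fun J => (hS J).exists_apply_ne_zero_forall_ne j
  have hinj : Function.Injective row := fun I J hrowIJ => by_contra fun hIJ =>
    hrow J (hL.apply_eq_zero_of_ne (hS I) hIJ (hrowIJ ▸ hrow I))
  obtain ⟨I, rfl⟩ := Finite.surjective_of_injective hinj i
  simp only [Matrix.sum_apply, entrywiseAbs, Matrix.of_apply]
  rw [Fintype.sum_eq_single I fun J hJ => by
      rw [hL.apply_eq_zero_of_ne (hS I) hJ.symm (hrow I), abs_zero],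
    (hS I).abs_apply_of_ne_zero (hrow I)]

end GardenRel

/-- The matrix `P_{IJ}`, the entrywise absolute value of `L_Iᵀ L_J`, defined for `I = J` too. It
records the permutation of the columns obtained by following an edge of color `I` and then one of
color `J`, forgetting the signs. -/
def absTransition {d N : ℕ} (L : Fin N → Matrix (Fin d) (Fin d) ℤ) (I J : Fin N) :
    Matrix (Fin d) (Fin d) ℤ :=
  entrywiseAbs ((L I)ᵀ * L J)

namespace GardenRel

variable {d N : ℕ} {L : Fin N → Matrix (Fin d) (Fin d) ℤ}

theorem absTransition_self (hL : GardenRel L) (I : Fin N) : absTransition L I I = 1 := by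
  rw [absTransition, hL.transpose_mul_self, entrywiseAbs_one]

theorem absTransition_comm (hL : GardenRel L) (I J : Fin N) :
    absTransition L I J = absTransition L J I := by
  rcases eq_or_ne I J with rfl | hIJ
  · rfl
  · rw [absTransition, hL.transpose_mul_eq_neg hIJ, entrywiseAbs_neg, absTransition]

theorem absTransition_ne_one [NeZero d] (hL : GardenRel L) {I J : Fin N} (hIJ : I ≠ J) :
    absTransition L I J ≠ 1 := fun hone => by
  have hdiag : |((L I)ᵀ * L J) 0 0| = 1 := congrFun (congrFun hone 0) 0
  rw [hL.transpose_mul_apply_self hIJ, abs_zero] at hdiag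
  exact zero_ne_one hdiag

theorem absTransition_mul (hL : GardenRel L) (hS : ∀ I, IsSignedPerm (L I)) (I J K : Fin N) :
    absTransition L I J * absTransition L J K = absTransition L I K := by
  have horth : entrywiseAbs (L J) * (entrywiseAbs (L J))ᵀ = 1 := by
    rw [mul_eq_one_comm, ← (hS J).entrywiseAbs_transpose_mul, hL.transpose_mul_self,
      entrywiseAbs_one]
  simp only [absTransition, (hS _).entrywiseAbs_transpose_mul]
  rw [Matrix.mul_assoc, ← Matrix.mul_assoc (entrywiseAbs (L J)), horth, Matrix.one_mul]

theorem absTransition_mul_self (hL : GardenRel L) (hS : ∀ I, IsSignedPerm (L I)) (I J : Fin N) :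
    absTransition L I J * absTransition L I J = 1 := by
  nth_rw 2 [hL.absTransition_comm]
  rw [hL.absTransition_mul hS, hL.absTransition_self]

theorem absTransition_injective [NeZero d] (hL : GardenRel L) (hS : ∀ I, IsSignedPerm (L I))
    (I : Fin N) : Function.Injective (absTransition L I) := fun J K hJK =>
  by_contra fun hne => hL.absTransition_ne_one hne <| by
    rw [← hL.absTransition_mul hS J I K, hL.absTransition_comm J I, ← hJK,
      hL.absTransition_mul_self hS]

theorem sum_absTransition {L : Fin d → Matrix (Fin d) (Fin d) ℤ} (hL : GardenRel L)
    (hS : ∀ I, IsSignedPerm (L I)) (I : Fin d) :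
    ∑ J, absTransition L I J = Matrix.of fun _ _ => 1 := by
  simp only [absTransition, (hS I).entrywiseAbs_transpose_mul]
  rw [← Matrix.mul_sum, hL.sum_entrywiseAbs hS]
  ext a b
  simpa [Matrix.mul_apply, entrywiseAbs] using (hS I).sum_abs_apply a

end GardenRel

theorem apply_eq_complementary_of_symm_of_sum_eq {ι A : Type*} [Fintype ι] [AddCommGroup A]
    [IsAddTorsionFree A] (hcard : Fintype.card ι = 4) {f : ι → ι → A}
    {diag total : A} (hsymm : ∀ I J, f I J = f J I) (hdiag : ∀ I, f I I = diag)
    (hsum : ∀ I, ∑ J, f I J = total) {I J K M : ι} (hnodup : [I, J, K, M].Nodup) :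
    f I J = f K M := by
  classical
  have huniv : Finset.univ = [I, J, K, M].toFinset :=
    (Finset.eq_univ_of_card _ ((List.toFinset_card_of_nodup hnodup).trans hcard.symm)).symm
  have hrow (X : ι) : f X I + (f X J + (f X K + f X M)) = total := by
    rw [← hsum X, huniv, List.sum_toFinset _ hnodup]
    simp
  have htwo : 2 • f I J = 2 • f K M := by
    linear_combination (norm := module) hrow I + hrow J - hrow K - hrow M
      - (hdiag I + hdiag J - hdiag K - hdiag M)
      + (hsymm I J - hsymm I K - hsymm I M - hsymm J K - hsymm J M - hsymm K M)
  exact nsmul_right_injective two_ne_zero htwo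

namespace IsAdinkra

variable {L : Fin 4 → Matrix (Fin 4) (Fin 4) ℤ}

theorem absTransition_eq_complementary (hL : IsAdinkra L) {I J K M : Fin 4}
    (hnodup : [I, J, K, M].Nodup) : absTransition L I J = absTransition L K M := by
  ext a b
  refine apply_eq_complementary_of_symm_of_sum_eq (f := fun I J => absTransition L I J a b)
    (diag := (1 : Matrix (Fin 4) (Fin 4) ℤ) a b) (total := 1) (Fintype.card_fin 4)
    (fun I J => ?_) (fun I => ?_) (fun I => ?_) hnodup
  · rw [hL.2.absTransition_comm]
  · rw [hL.2.absTransition_self]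
  · rw [← Matrix.sum_apply, hL.2.sum_absTransition hL.1, Matrix.of_apply]

theorem absTransition_mul_eq_fourth (hL : IsAdinkra L) {I J K M : Fin 4}
    (hnodup : [I, J, K, M].Nodup) :
    absTransition L I J * absTransition L I K = absTransition L I M := by
  have hcross : [J, K, I, M].Nodup :=
    (List.perm_append_comm_assoc [I] [J, K] [M]).nodup_iff.mp hnodup
  rw [hL.2.absTransition_comm I J, hL.2.absTransition_mul hL.1,
    hL.absTransition_eq_complementary hcross]

end IsAdinkra

theorem stmt5 (L : Fin 4 → Matrix (Fin 4) (Fin 4) ℤ) (hL : IsAdinkra L)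
    (P : Fin 4 → Fin 4 → Matrix (Fin 4) (Fin 4) ℤ)
    (hP : ∀ I J : Fin 4, I ≠ J → P I J = entrywiseAbs ((L I)ᵀ * L J)) :
    (P 0 1 = P 2 3 ∧ P 0 2 = P 1 3 ∧ P 0 3 = P 1 2) ∧
    ([(1 : Matrix (Fin 4) (Fin 4) ℤ), P 0 1, P 0 2, P 0 3].Pairwise (· ≠ ·)) ∧
    (∀ I J : Fin 4, I ≠ J → P I J * P I J = 1) ∧
    (P 0 1 * P 0 2 = P 0 3 ∧ P 0 2 * P 0 3 = P 0 1 ∧ P 0 1 * P 0 3 = P 0 2) := by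
  have hPL (I J : Fin 4) (hIJ : I ≠ J) : P I J = absTransition L I J := hP I J hIJ
  have hinj := hL.2.absTransition_injective hL.1 0
  have hdistinct : [absTransition L 0 0, absTransition L 0 1, absTransition L 0 2,
      absTransition L 0 3].Nodup :=
    List.Nodup.map (l := [0, 1, 2, 3]) hinj (by decide)
  rw [hL.2.absTransition_self] at hdistinct
  have hsq (I J : Fin 4) (hIJ : I ≠ J) : P I J * P I J = 1 := by
    rw [hPL I J hIJ, hL.2.absTransition_mul_self hL.1]
  rw [hPL 0 1 (by decide), hPL 0 2 (by decide), hPL 0 3 (by decide), hPL 1 2 (by decide),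
    hPL 1 3 (by decide), hPL 2 3 (by decide)]
  refine ⟨⟨?_, ?_, ?_⟩, hdistinct, hsq, ?_, ?_, ?_⟩
  iterate 3 exact hL.absTransition_eq_complementary (by decide)
  iterate 3 exact hL.absTransition_mul_eq_fourth (by decide)
end

section
/- Let A = (L_1,L_2,L_3,L_4) and A' = (L'_1,L'_2,L'_3,L'_4) encode (4,1) valise adinkras with chiralities χ and χ' respectively. Then for every partition {I,J} ∪ {K,L} = {1,2,3,4} with I < J and K < L, one has (L_Iᵀ·L_J)·(L'_Iᵀ·L'_J) = χ·χ'·(L_Kᵀ·L_L)·(L'_Kᵀ·L'_L). -/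
open Matrix

/-! The product `(L 0)ᵀ * L 1 * (L 2)ᵀ * L 3` is alternating: by the garden algebra relations,
exchanging two neighbouring indices changes its sign. Hence the chirality equation holds, up to
the sign of the permutation, for every ordering `I, J, K, M` of the four indices, and as
`(L K)ᵀ * L M` squares to `-1` it becomes `(L I)ᵀ * L J = ± χ • ((L K)ᵀ * L M)`. The sign depends
only on the ordering, so it cancels in the product of the equations for `L` and `L'`. -/

/-- The garden algebra relations between a family `L` and the family `R` of its inverses, in an
arbitrary ring; for adinkras `R I = (L I)ᵀ`. The diagonal relations `2 * (L I * R I) = 2` are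
imposed in the form `L I * R I = 1`, so that `2` need not be cancellable. -/
structure IsGardenPair {ι A : Type*} [Ring A] (L R : ι → A) : Prop where
  L_mul_R : ∀ I, L I * R I = 1
  R_mul_L : ∀ I, R I * L I = 1
  L_mul_R_anticomm : ∀ {I J}, I ≠ J → L I * R J = -(L J * R I)
  R_mul_L_anticomm : ∀ {I J}, I ≠ J → R I * L J = -(R J * L I)

theorem GardenRel.isGardenPair {d N : ℕ} {L : Fin N → Matrix (Fin d) (Fin d) ℤ}
    (h : GardenRel L) : IsGardenPair L fun I => (L I)ᵀ where
  L_mul_R I := by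
    have h2 : (2 : ℤ) • (L I * (L I)ᵀ) = (2 : ℤ) • 1 := by simpa [two_smul] using (h I I).1
    exact smul_right_injective _ two_ne_zero h2
  R_mul_L I := by
    have h2 : (2 : ℤ) • ((L I)ᵀ * L I) = (2 : ℤ) • 1 := by simpa [two_smul] using (h I I).2
    exact smul_right_injective _ two_ne_zero h2
  L_mul_R_anticomm {I J} hIJ := eq_neg_of_add_eq_zero_left ((h I J).1.trans (if_neg hIJ))
  R_mul_L_anticomm {I J} hIJ := eq_neg_of_add_eq_zero_left ((h I J).2.trans (if_neg hIJ))

/-- The product whose value `-χ` defines the chirality `χ` of a quadruple. -/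
def chiralProduct {A : Type*} [Mul A] (L R : Fin 4 → A) : A :=
  R 0 * L 1 * R 2 * L 3

namespace IsGardenPair

variable {A : Type*} [Ring A]

section Family

variable {ι : Type*} {L R : ι → A}

theorem comp {κ : Type*} (h : IsGardenPair L R) {f : κ → ι} (hf : f.Injective) :
    IsGardenPair (L ∘ f) (R ∘ f) where
  L_mul_R I := h.L_mul_R (f I)
  R_mul_L I := h.R_mul_L (f I)
  L_mul_R_anticomm hIJ := h.L_mul_R_anticomm (hf.ne hIJ)
  R_mul_L_anticomm hIJ := h.R_mul_L_anticomm (hf.ne hIJ)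

theorem mul_mul_self_eq_neg_one (h : IsGardenPair L R) {I J : ι} (hIJ : I ≠ J) :
    R I * L J * (R I * L J) = -1 :=
  calc R I * L J * (R I * L J) = R I * L J * -(R J * L I) := by rw [← h.R_mul_L_anticomm hIJ]
    _ = -(R I * (L J * R J) * L I) := by simp only [mul_neg, mul_assoc]
    _ = -1 := by rw [h.L_mul_R, mul_one, h.R_mul_L]

end Family

variable {L R : Fin 4 → A}

theorem chiralProduct_comp_swap (h : IsGardenPair L R) (i : Fin 3) :
    chiralProduct (L ∘ Equiv.swap i.castSucc i.succ) (R ∘ Equiv.swap i.castSucc i.succ) =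
      -chiralProduct L R := by
  fin_cases i
  · change R 1 * L 0 * R 2 * L 3 = -(R 0 * L 1 * R 2 * L 3)
    simp only [h.R_mul_L_anticomm one_ne_zero, neg_mul]
  · change R 0 * L 2 * R 1 * L 3 = -(R 0 * L 1 * R 2 * L 3)
    simp only [mul_assoc (R 0), h.L_mul_R_anticomm (show (2 : Fin 4) ≠ 1 by decide), neg_mul,
      mul_neg]
  · change R 0 * L 1 * R 3 * L 2 = -(R 0 * L 1 * R 2 * L 3)
    simp only [mul_assoc, h.R_mul_L_anticomm (show (3 : Fin 4) ≠ 2 by decide), mul_neg]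

theorem chiralProduct_comp_perm (h : IsGardenPair L R) (σ : Equiv.Perm (Fin 4)) :
    chiralProduct (L ∘ σ) (R ∘ σ) = Equiv.Perm.sign σ • chiralProduct L R := by
  have hσ : σ ∈ Submonoid.closure
      (Set.range fun i : Fin 3 => Equiv.swap i.castSucc i.succ) := by
    rw [Equiv.Perm.mclosure_swap_castSucc_succ]
    exact Submonoid.mem_top σ
  induction hσ using Submonoid.closure_induction_right with
  | one => simp
  | mul_right σ _ τ hτ ih =>
    obtain ⟨i, rfl⟩ := hτ
    have hi : Equiv.Perm.sign (Equiv.swap i.castSucc i.succ) = -1 :=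
      Equiv.Perm.sign_swap i.castSucc_lt_succ.ne
    rw [Equiv.Perm.coe_mul, ← Function.comp_assoc, ← Function.comp_assoc,
      (h.comp σ.injective).chiralProduct_comp_swap, ih, Equiv.Perm.sign_mul, hi, mul_neg_one,
      Units.neg_smul]

variable {S : Type*} [CommRing S] [Algebra S A] {χ : S}

theorem mul_eq_smul_of_chiralProduct_eq (h : IsGardenPair L R)
    (hχ : chiralProduct L R = -(χ • 1)) : R 0 * L 1 = χ • (R 2 * L 3) :=
  calc R 0 * L 1 = -(R 0 * L 1 * (R 2 * L 3 * (R 2 * L 3))) := by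
        rw [h.mul_mul_self_eq_neg_one (by decide), mul_neg_one, neg_neg]
    _ = -(chiralProduct L R * (R 2 * L 3)) := by simp only [chiralProduct, mul_assoc]
    _ = χ • (R 2 * L 3) := by rw [hχ, neg_mul, neg_neg, smul_one_mul]

theorem mul_eq_sign_smul_of_chiralProduct_eq (h : IsGardenPair L R)
    (hχ : chiralProduct L R = -(χ • 1)) (σ : Equiv.Perm (Fin 4)) :
    R (σ 0) * L (σ 1) = (Equiv.Perm.sign σ • χ) • (R (σ 2) * L (σ 3)) :=
  (h.comp σ.injective).mul_eq_smul_of_chiralProduct_eq <| by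
    rw [h.chiralProduct_comp_perm, hχ, smul_neg, smul_assoc]

end IsGardenPair

theorem exists_perm_of_insert_eq_univ {I J K M : Fin 4}
    (h : ({I, J, K, M} : Finset (Fin 4)) = Finset.univ) :
    ∃ σ : Equiv.Perm (Fin 4), σ 0 = I ∧ σ 1 = J ∧ σ 2 = K ∧ σ 3 = M := by
  have hsurj : Function.Surjective ![I, J, K, M] := by
    intro x
    have hx : x ∈ ({I, J, K, M} : Finset (Fin 4)) := h ▸ Finset.mem_univ x
    simp only [Finset.mem_insert, Finset.mem_singleton] at hx
    rcases hx with rfl | rfl | rfl | rfl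
    exacts [⟨0, rfl⟩, ⟨1, rfl⟩, ⟨2, rfl⟩, ⟨3, rfl⟩]
  exact ⟨Equiv.ofBijective _ hsurj.bijective_of_finite, rfl, rfl, rfl, rfl⟩

theorem stmt11_general {A S : Type*} [Ring A] [CommRing S] [Algebra S A]
    {L R L' R' : Fin 4 → A} (h : IsGardenPair L R) (h' : IsGardenPair L' R') {χ χ' : S}
    (hχ : R 0 * L 1 * R 2 * L 3 = -(χ • 1)) (hχ' : R' 0 * L' 1 * R' 2 * L' 3 = -(χ' • 1))
    {I J K M : Fin 4} (hU : ({I, J, K, M} : Finset (Fin 4)) = Finset.univ) :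
    R I * L J * (R' I * L' J) = (χ * χ') • (R K * L M * (R' K * L' M)) := by
  obtain ⟨σ, rfl, rfl, rfl, rfl⟩ := exists_perm_of_insert_eq_univ hU
  rw [h.mul_eq_sign_smul_of_chiralProduct_eq hχ σ, h'.mul_eq_sign_smul_of_chiralProduct_eq hχ' σ,
    smul_mul_smul_comm, smul_mul_smul_comm, Int.units_mul_self, one_smul]

theorem stmt11 (L L' : Fin 4 → Matrix (Fin 4) (Fin 4) ℤ)
    (hL : IsAdinkra L) (hL' : IsAdinkra L')
    (χ χ' : ℤ) (hχ : χ = 1 ∨ χ = -1) (hχ' : χ' = 1 ∨ χ' = -1)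
    (hchir : (L 0)ᵀ * L 1 * (L 2)ᵀ * L 3 = -(χ • (1 : Matrix (Fin 4) (Fin 4) ℤ)))
    (hchir' : (L' 0)ᵀ * L' 1 * (L' 2)ᵀ * L' 3 = -(χ' • (1 : Matrix (Fin 4) (Fin 4) ℤ))) :
    ∀ I J K M : Fin 4, I < J → K < M →
      ({I, J, K, M} : Finset (Fin 4)) = Finset.univ →
      ((L I)ᵀ * L J) * ((L' I)ᵀ * L' J) =
        (χ * χ') • (((L K)ᵀ * L M) * ((L' K)ᵀ * L' M)) := fun _ _ _ _ _ _ hU =>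
  stmt11_general hL.2.isGardenPair hL'.2.isGardenPair hchir hchir' hU
end

section
/- For all quadruples A = (L_1,L_2,L_3,L_4) and A' = (L'_1,L'_2,L'_3,L'_4) encoding (4,1) valise adinkras, the integer Σ_{I≠J} trace(L_Iᵀ·L_J·L'_Iᵀ·L'_J) (the sum over all ordered pairs of distinct I,J ∈ {1,2,3,4}) lies in the set {0, 16, −16, −48}; equivalently, the gadget OG(A,A') takes only the four values 1, 1/3, −1/3, 0. -/
open Matrix

/-- `Σ_{I≠J} trace(L_Iᵀ·L_J·L'_Iᵀ·L'_J)`, summed over ordered pairs of distinct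
`I, J ∈ {1,2,3,4}`; the gadget is `OG(A,A') = -(1/48)` times this quantity. -/
def gadgetSum (L L' : Fin 4 → Matrix (Fin 4) (Fin 4) ℤ) : ℤ :=
  ∑ I : Fin 4, ∑ J : Fin 4,
    if I ≠ J then Matrix.trace ((L I)ᵀ * L J * (L' I)ᵀ * L' J) else 0

/-!
For a skew-symmetric `4 × 4` matrix `M` with Hodge dual `⋆M`, the product `M * ⋆M` is the scalar
`-κ`, where `κ` is the Pfaffian of `M`. If `M` is also orthogonal, then `M * M = -1`, so
`⋆M = κ M` with `κ = ±1`: the matrix is self-dual or anti-self-dual. Matrices of opposite duality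
commute, so the pairwise anticommuting matrices `L₀ᵀ L₁`, `L₀ᵀ L₂`, `L₀ᵀ L₃` of an adinkra share one
duality `κ`, and their first rows, without the leading zero, form an orthogonal `3 × 3` matrix `U`.
For distinct `I, J ≠ 0`, `L_Iᵀ L_J` is up to sign the product of two of these matrices, which is
given by the cross product of the corresponding rows of `U`.

For two adinkras, with `G = U U'ᵀ`, the gadget sum becomes
`-2 (1 + κ κ') (2 tr G + 2 tr (adj G))`, and `adj G = (det G) Gᵀ` turns it into
`-4 (1 + κ κ') (1 + det G) tr G`. It vanishes unless `κ κ' = det G = 1`, when it is `-16 tr G` for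
an integral rotation `G`, whose trace is `-1`, `0`, `1` or `3`.
-/

section Bivector

variable {R : Type*} [CommRing R]

/-- The skew-symmetric `4 × 4` matrix with electric part `e` and magnetic part `b`, in the layout
of the electromagnetic field tensor. Swapping `e` and `b` is Hodge duality, so the matrix is
self-dual when `b = e` and anti-self-dual when `b = -e`. -/
def bivectorMatrix (e b : Fin 3 → R) : Matrix (Fin 4) (Fin 4) R :=
  !![0, e 0, e 1, e 2;
    -e 0, 0, b 2, -b 1;
    -e 1, -b 2, 0, b 0;
    -e 2, b 1, -b 0, 0]

lemma smul_bivectorMatrix (c : R) (e b : Fin 3 → R) :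
    c • bivectorMatrix e b = bivectorMatrix (c • e) (c • b) := by
  ext i j
  fin_cases i <;> fin_cases j <;> simp [bivectorMatrix]

lemma bivectorMatrix_inj {e b e' b' : Fin 3 → R} :
    bivectorMatrix e b = bivectorMatrix e' b' ↔ e = e' ∧ b = b' := by
  refine ⟨fun h => ?_, fun ⟨he, hb⟩ => by rw [he, hb]⟩
  have hentry (i j) := congrFun (congrFun h i) j
  constructor <;> ext i <;> fin_cases i
  exacts [hentry 0 1, hentry 0 2, hentry 0 3, hentry 2 3, hentry 3 1, hentry 1 2]

lemma exists_eq_bivectorMatrix [NoZeroDivisors R] [NeZero (2 : R)]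
    {M : Matrix (Fin 4) (Fin 4) R} (hM : Mᵀ = -M) : ∃ e b, M = bivectorMatrix e b := by
  have hskew (i j) : M j i = -M i j := congrFun (congrFun hM i) j
  have hdiag (i) : M i i = 0 := by
    have h : 2 * M i i = 0 := by linear_combination hskew i i
    exact (mul_eq_zero.mp h).resolve_left two_ne_zero
  refine ⟨![M 0 1, M 0 2, M 0 3], ![M 2 3, M 3 1, M 1 2], ?_⟩
  ext i j
  fin_cases i <;> fin_cases j <;>
    simp [bivectorMatrix, hdiag, hskew 0 1, hskew 0 2, hskew 0 3, hskew 1 2, hskew 2 3, hskew 3 1]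

lemma bivectorMatrix_mul_swap (e b : Fin 3 → R) :
    bivectorMatrix e b * bivectorMatrix b e = -(e ⬝ᵥ b) • (1 : Matrix (Fin 4) (Fin 4) R) := by
  ext i j
  fin_cases i <;> fin_cases j <;>
    simp [bivectorMatrix, Fin.sum_univ_succ, dotProduct] <;> ring

lemma bivectorMatrix_mul_swap_add (e b e' b' : Fin 3 → R) :
    bivectorMatrix e b * bivectorMatrix b' e' + bivectorMatrix e' b' * bivectorMatrix b e =
      -(e ⬝ᵥ b' + e' ⬝ᵥ b) • (1 : Matrix (Fin 4) (Fin 4) R) := by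
  ext i j
  fin_cases i <;> fin_cases j <;>
    simp [bivectorMatrix, Fin.sum_univ_succ, dotProduct] <;> ring

lemma bivectorMatrix_mul_apply_zero_zero (e b e' b' : Fin 3 → R) :
    (bivectorMatrix e b * bivectorMatrix e' b') 0 0 = -(e ⬝ᵥ e') := by
  simp only [mul_apply, Fin.sum_univ_four, vec3_dotProduct, bivectorMatrix, of_apply, cons_val]
  ring

lemma trace_bivectorMatrix_mul (e b e' b' : Fin 3 → R) :
    trace (bivectorMatrix e b * bivectorMatrix e' b') = -2 * (e ⬝ᵥ e' + b ⬝ᵥ b') := by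
  simp only [trace, diag_apply, mul_apply, Fin.sum_univ_four, vec3_dotProduct, bivectorMatrix,
    of_apply, cons_val]
  ring

lemma bivectorMatrix_mul_of_dual {κ : R} (hκ : κ * κ = 1) (u v : Fin 3 → R) :
    bivectorMatrix u (κ • u) * bivectorMatrix v (κ • v) =
      -(u ⬝ᵥ v) • (1 : Matrix (Fin 4) (Fin 4) R) - bivectorMatrix (κ • (u ⨯₃ v)) (u ⨯₃ v) := by
  ext i j
  fin_cases i <;> fin_cases j <;>
    simp [bivectorMatrix, Fin.sum_univ_succ, dotProduct, cross_apply] <;> grind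

lemma exists_eq_bivectorMatrix_of_mem_orthogonalGroup [NoZeroDivisors R] [NeZero (2 : R)]
    {M : Matrix (Fin 4) (Fin 4) R} (hskew : Mᵀ = -M) (horth : M ∈ orthogonalGroup (Fin 4) R) :
    ∃ (κ : R) (u : Fin 3 → R),
      κ * κ = 1 ∧ u ⬝ᵥ u = 1 ∧ M = bivectorMatrix u (κ • u) := by
  obtain ⟨e, b, rfl⟩ := exists_eq_bivectorMatrix hskew
  have hsq : bivectorMatrix e b * bivectorMatrix e b = -1 := by
    rw [← (mem_orthogonalGroup_iff _ _).mp horth, hskew, Matrix.mul_neg, neg_neg]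
  have hunit : e ⬝ᵥ e = 1 := by
    simpa [hsq] using (bivectorMatrix_mul_apply_zero_zero e b e b).symm
  have hdual : bivectorMatrix b e = (e ⬝ᵥ b) • bivectorMatrix e b := by
    have h := congrArg (bivectorMatrix e b * ·) (bivectorMatrix_mul_swap e b)
    simpa [← Matrix.mul_assoc, hsq] using h
  rw [smul_bivectorMatrix, bivectorMatrix_inj] at hdual
  obtain ⟨hb, he⟩ := hdual
  refine ⟨e ⬝ᵥ b, e, ?_, hunit, congrArg _ hb⟩
  calc (e ⬝ᵥ b) * (e ⬝ᵥ b) = e ⬝ᵥ ((e ⬝ᵥ b) • b) := by rw [dotProduct_smul, smul_eq_mul]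
    _ = 1 := by rw [← he, hunit]

lemma dotProduct_eq_zero_of_bivectorMatrix_anticommute [NoZeroDivisors R] [NeZero (2 : R)]
    {e b e' b' : Fin 3 → R}
    (hanti : bivectorMatrix e b * bivectorMatrix e' b' +
      bivectorMatrix e' b' * bivectorMatrix e b = 0) :
    e ⬝ᵥ e' = 0 := by
  have h := congrFun (congrFun hanti 0) 0
  rw [Matrix.add_apply, bivectorMatrix_mul_apply_zero_zero, bivectorMatrix_mul_apply_zero_zero,
    dotProduct_comm e' e, Matrix.zero_apply] at h
  have htwo : 2 * (e ⬝ᵥ e') = 0 := by linear_combination -h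
  exact (mul_eq_zero.mp htwo).resolve_left two_ne_zero

lemma dual_eq_of_bivectorMatrix_anticommute [NoZeroDivisors R] [NeZero (2 : R)]
    {κ κ' : R} {u u' : Fin 3 → R} (hκ : κ * κ = 1) (hκ' : κ' * κ' = 1)
    (hM : bivectorMatrix u (κ • u) ∈ orthogonalGroup (Fin 4) R)
    (hM' : bivectorMatrix u' (κ' • u') ∈ orthogonalGroup (Fin 4) R)
    (hanti : bivectorMatrix u (κ • u) * bivectorMatrix u' (κ' • u') +
      bivectorMatrix u' (κ' • u') * bivectorMatrix u (κ • u) = 0) :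
    κ = κ' := by
  have hdot : u ⬝ᵥ u' = 0 := dotProduct_eq_zero_of_bivectorMatrix_anticommute hanti
  have hswap {c : R} (hc : c * c = 1) (v : Fin 3 → R) :
      bivectorMatrix (c • v) v = c • bivectorMatrix v (c • v) := by
    rw [smul_bivectorMatrix, smul_smul, hc, one_smul]
  have hsub : (κ' - κ) • (bivectorMatrix u (κ • u) * bivectorMatrix u' (κ' • u')) = 0 := by
    have h := bivectorMatrix_mul_swap_add u (κ • u) u' (κ' • u')
    rwa [hswap hκ, hswap hκ', dotProduct_smul, dotProduct_smul, dotProduct_comm u', hdot,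
      smul_zero, smul_zero, add_zero, neg_zero, zero_smul, Matrix.mul_smul, Matrix.mul_smul,
      eq_neg_of_add_eq_zero_right hanti, smul_neg, ← sub_eq_add_neg, ← sub_smul] at h
  have hone : (κ' - κ) • (1 : Matrix (Fin 4) (Fin 4) R) = 0 := by
    rw [← (mem_orthogonalGroup_iff _ _).mp (mul_mem hM hM'), ← Matrix.smul_mul, hsub,
      Matrix.zero_mul]
  have hzero : κ' - κ = 0 := by simpa using congrFun (congrFun hone 0) 0
  exact (sub_eq_zero.mp hzero).symm

end Bivector

section Orthogonal

variable {n R : Type*} [Fintype n] [DecidableEq n] [CommRing R]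

lemma mem_orthogonalGroup_iff_dotProduct {G : Matrix n n R} :
    G ∈ orthogonalGroup n R ↔ ∀ i j, G i ⬝ᵥ G j = (1 : Matrix n n R) i j := by
  rw [mem_orthogonalGroup_iff, ← Matrix.ext_iff]
  rfl

lemma adjugate_eq_of_mem_orthogonalGroup {G : Matrix n n R} (hG : G ∈ orthogonalGroup n R) :
    G.adjugate = G.det • Gᵀ := by
  rw [← Matrix.mul_one G.adjugate, ← (mem_orthogonalGroup_iff _ _).mp hG, ← Matrix.mul_assoc,
    adjugate_mul, Matrix.smul_mul, Matrix.one_mul]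

lemma transpose_mem_orthogonalGroup {G : Matrix n n R} (hG : G ∈ orthogonalGroup n R) :
    Gᵀ ∈ orthogonalGroup n R := by
  rwa [mem_orthogonalGroup_iff, transpose_transpose, ← mem_orthogonalGroup_iff']

lemma det_mul_self_of_mem_orthogonalGroup {G : Matrix n n R} (hG : G ∈ orthogonalGroup n R) :
    G.det * G.det = 1 := by
  simpa using congrArg det ((mem_orthogonalGroup_iff _ _).mp hG)

lemma sum_cross_dotProduct_cross (U V : Matrix (Fin 3) (Fin 3) R) :
    ∑ m, ∑ n, (U m ⨯₃ U n) ⬝ᵥ (V m ⨯₃ V n) = 2 * trace (U * Vᵀ).adjugate := by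
  have hentry (m n) : U m ⬝ᵥ V n = (U * Vᵀ) m n := rfl
  simp only [cross_dot_cross, hentry, adjugate_fin_three, trace_fin_three, Fin.sum_univ_three,
    of_apply, cons_val]
  ring

lemma eq_zero_or_eq_single_of_dotProduct_self_eq_one {u : n → ℤ} (hu : u ⬝ᵥ u = 1) (i : n) :
    u i = 0 ∨ u = Pi.single i 1 ∨ u = Pi.single i (-1) := by
  refine or_iff_not_imp_left.mpr fun hi => ?_
  have hpos : 0 < u i * u i := mul_self_pos.mpr hi
  have hsum : u i * u i + ∑ j ∈ Finset.univ.erase i, u j * u j = 1 := by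
    rw [Finset.add_sum_erase _ (fun j => u j * u j) (Finset.mem_univ i), ← hu, dotProduct]
  have hnonneg : 0 ≤ ∑ j ∈ Finset.univ.erase i, u j * u j :=
    Finset.sum_nonneg fun j _ => mul_self_nonneg (u j)
  have hoff (j : n) (hj : j ≠ i) : u j = 0 :=
    (Finset.sum_mul_self_eq_zero_iff (Finset.univ.erase i) u).mp (by linarith) j
      (by simpa using hj)
  have hu_single : u = Pi.single i (u i) := by
    ext j
    by_cases hj : j = i
    · rw [hj, Pi.single_eq_same]
    · rw [hoff j hj, Pi.single_eq_of_ne hj]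
  have hsq : u i * u i = 1 := le_antisymm (by linarith) hpos
  rcases mul_self_eq_one_iff.mp hsq with h | h
  · exact Or.inl (h ▸ hu_single)
  · exact Or.inr (h ▸ hu_single)

lemma trace_mem_of_mem_specialOrthogonalGroup {G : Matrix (Fin 3) (Fin 3) ℤ}
    (hG : G ∈ specialOrthogonalGroup (Fin 3) ℤ) : trace G ∈ ({-1, 0, 1, 3} : Set ℤ) := by
  obtain ⟨horth, hdet⟩ := mem_specialOrthogonalGroup_iff.mp hG
  have hrow (i) := eq_zero_or_eq_single_of_dotProduct_self_eq_one
    ((mem_orthogonalGroup_iff_dotProduct.mp horth i i).trans (one_apply_eq i)) i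
  have hdiag (i) : G i i = 0 ∨ G i i = 1 ∨ G i i = -1 :=
    (hrow i).imp_right (Or.imp (fun h => by simp [h]) (fun h => by simp [h]))
  have hoff {i j} (hi : G i i ≠ 0) (hij : j ≠ i) : G i j = 0 := by
    rcases (hrow i).resolve_left hi with h | h <;> rw [h, Pi.single_eq_of_ne hij]
  have hminor : G 0 0 * G 1 1 - G 0 1 * G 1 0 = G 2 2 := by
    have hadj : G.adjugate = Gᵀ := by rw [adjugate_eq_of_mem_orthogonalGroup horth, hdet, one_smul]
    simpa [adjugate_fin_three] using congrFun (congrFun hadj 2) 2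
  rw [trace_fin_three]
  -- A nonzero diagonal entry kills the rest of its row, so `hminor` determines `G 2 2`.
  by_cases h : G 0 0 = 0 ∧ G 1 1 = 0
  · rw [h.1, h.2]
    rcases hdiag 2 with h2 | h2 | h2 <;> simp [h2]
  · have hprod : G 0 1 * G 1 0 = 0 := by
      rw [not_and_or] at h
      rcases h with h | h
      · rw [hoff h one_ne_zero, zero_mul]
      · rw [hoff h zero_ne_one, mul_zero]
    rw [← hminor, hprod]
    rcases hdiag 0 with h0 | h0 | h0 <;> rcases hdiag 1 with h1 | h1 | h1 <;> simp [h0, h1]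

end Orthogonal

lemma trace_transpose_mul_mul_swap {n R : Type*} [Fintype n] [CommRing R]
    (A B A' B' : Matrix n n R) : trace (Bᵀ * A * B'ᵀ * A') = trace (Aᵀ * B * A'ᵀ * B') := by
  rw [← trace_transpose, Matrix.mul_assoc, transpose_mul, trace_mul_comm]
  simp only [transpose_mul, transpose_transpose, Matrix.mul_assoc]

section GardenAlgebra

variable {d N : ℕ} {L : Fin N → Matrix (Fin d) (Fin d) ℤ}

lemma GardenRel.mem_orthogonalGroup (hL : GardenRel L) (I : Fin N) :
    L I ∈ orthogonalGroup (Fin d) ℤ := by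
  have h := (hL I I).1
  rw [if_pos rfl, ← two_smul ℤ] at h
  exact (mem_orthogonalGroup_iff _ _).mpr (smul_right_injective _ two_ne_zero h)

lemma GardenRel.transpose_mul_mem_orthogonalGroup (hL : GardenRel L) (I J : Fin N) :
    (L I)ᵀ * L J ∈ orthogonalGroup (Fin d) ℤ :=
  mul_mem (transpose_mem_orthogonalGroup (hL.mem_orthogonalGroup I)) (hL.mem_orthogonalGroup J)

lemma GardenRel.transpose_mul_add_transpose_mul (hL : GardenRel L) {I J : Fin N} (hIJ : I ≠ J) :
    (L I)ᵀ * L J + (L J)ᵀ * L I = 0 := by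
  rw [(hL I J).2, if_neg hIJ]

lemma GardenRel.transpose_transpose_mul (hL : GardenRel L) {I J : Fin N} (hIJ : I ≠ J) :
    ((L I)ᵀ * L J)ᵀ = -((L I)ᵀ * L J) := by
  rw [transpose_mul, transpose_transpose]
  exact eq_neg_of_add_eq_zero_right (hL.transpose_mul_add_transpose_mul hIJ)

lemma GardenRel.transpose_mul_eq_neg_mul (hL : GardenRel L) {I K : Fin N} (hKI : K ≠ I)
    (J : Fin N) : (L I)ᵀ * L J = -(((L K)ᵀ * L I) * ((L K)ᵀ * L J)) := by
  rw [← Matrix.neg_mul, ← hL.transpose_transpose_mul hKI, transpose_mul, transpose_transpose,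
    Matrix.mul_assoc, ← Matrix.mul_assoc (L K),
    (mem_orthogonalGroup_iff _ _).mp (hL.mem_orthogonalGroup K), Matrix.one_mul]

lemma GardenRel.anticommute (hL : GardenRel L) {I J K : Fin N} (hKI : K ≠ I) (hKJ : K ≠ J)
    (hIJ : I ≠ J) :
    ((L K)ᵀ * L I) * ((L K)ᵀ * L J) + ((L K)ᵀ * L J) * ((L K)ᵀ * L I) = 0 := by
  rw [← neg_eq_zero, neg_add, ← hL.transpose_mul_eq_neg_mul hKI, ← hL.transpose_mul_eq_neg_mul hKJ]
  exact hL.transpose_mul_add_transpose_mul hIJ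

end GardenAlgebra

section Frame

variable {L L' : Fin 4 → Matrix (Fin 4) (Fin 4) ℤ} {κ κ' : ℤ} {U U' : Matrix (Fin 3) (Fin 3) ℤ}

/-- The products `L₀ᵀ Lₙ` with `n ≠ 0` are the bivectors of duality `κ = ±1` with electric parts
the rows of the orthogonal matrix `U`. The indices start at `0`, so row `n` of `U` belongs to
`L (n + 1)`. These data determine all products `L_Iᵀ L_J` of a garden algebra. -/
structure IsChiralFrame (L : Fin 4 → Matrix (Fin 4) (Fin 4) ℤ) (κ : ℤ)
    (U : Matrix (Fin 3) (Fin 3) ℤ) : Prop where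
  mul_self : κ * κ = 1
  mem_orthogonalGroup : U ∈ orthogonalGroup (Fin 3) ℤ
  transpose_mul_succ (n : Fin 3) : (L 0)ᵀ * L n.succ = bivectorMatrix (U n) (κ • U n)

lemma GardenRel.exists_isChiralFrame (hL : GardenRel L) : ∃ κ U, IsChiralFrame L κ U := by
  choose κ u hκ hu hM using fun n : Fin 3 =>
    exists_eq_bivectorMatrix_of_mem_orthogonalGroup
      (hL.transpose_transpose_mul (Fin.succ_ne_zero n).symm)
      (hL.transpose_mul_mem_orthogonalGroup 0 n.succ)
  have horth (n : Fin 3) : bivectorMatrix (u n) (κ n • u n) ∈ orthogonalGroup (Fin 4) ℤ :=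
    hM n ▸ hL.transpose_mul_mem_orthogonalGroup 0 n.succ
  have hanti {m n : Fin 3} (hmn : m ≠ n) := hL.anticommute (Fin.succ_ne_zero m).symm
    (Fin.succ_ne_zero n).symm ((Fin.succ_injective 3).ne hmn)
  simp only [hM] at hanti
  have hκ_eq (n : Fin 3) : κ n = κ 0 := by
    by_cases hn : n = 0
    · rw [hn]
    · exact dual_eq_of_bivectorMatrix_anticommute (hκ n) (hκ 0) (horth n) (horth 0) (hanti hn)
  refine ⟨κ 0, Matrix.of u, hκ 0, mem_orthogonalGroup_iff_dotProduct.mpr fun m n => ?_, fun n => ?_⟩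
  · by_cases hmn : m = n
    · rw [hmn, one_apply_eq]
      exact hu n
    · rw [one_apply_ne hmn]
      exact dotProduct_eq_zero_of_bivectorMatrix_anticommute (hanti hmn)
  · rw [hM, hκ_eq]
    rfl

lemma IsChiralFrame.transpose_succ_mul_succ (h : IsChiralFrame L κ U) (hL : GardenRel L)
    {m n : Fin 3} (hmn : m ≠ n) :
    (L m.succ)ᵀ * L n.succ = bivectorMatrix (κ • (U m ⨯₃ U n)) (U m ⨯₃ U n) := by
  have hdot : U m ⬝ᵥ U n = 0 :=
    (mem_orthogonalGroup_iff_dotProduct.mp h.mem_orthogonalGroup m n).trans (one_apply_ne hmn)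
  rw [hL.transpose_mul_eq_neg_mul (Fin.succ_ne_zero m).symm, h.transpose_mul_succ,
    h.transpose_mul_succ, bivectorMatrix_mul_of_dual h.mul_self, hdot, neg_zero, zero_smul,
    zero_sub, neg_neg]

lemma IsChiralFrame.trace_zero_succ (h : IsChiralFrame L κ U) (h' : IsChiralFrame L' κ' U')
    (n : Fin 3) :
    trace ((L 0)ᵀ * L n.succ * (L' 0)ᵀ * L' n.succ) = -2 * (1 + κ * κ') * (U n ⬝ᵥ U' n) := by
  rw [Matrix.mul_assoc, h.transpose_mul_succ, h'.transpose_mul_succ, trace_bivectorMatrix_mul,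
    smul_dotProduct, dotProduct_smul, smul_eq_mul, smul_eq_mul]
  ring

lemma IsChiralFrame.trace_succ_succ (h : IsChiralFrame L κ U) (h' : IsChiralFrame L' κ' U')
    (hL : GardenRel L) (hL' : GardenRel L') {m n : Fin 3} (hmn : m ≠ n) :
    trace ((L m.succ)ᵀ * L n.succ * (L' m.succ)ᵀ * L' n.succ) =
      -2 * (1 + κ * κ') * ((U m ⨯₃ U n) ⬝ᵥ (U' m ⨯₃ U' n)) := by
  rw [Matrix.mul_assoc, h.transpose_succ_mul_succ hL hmn, h'.transpose_succ_mul_succ hL' hmn,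
    trace_bivectorMatrix_mul, smul_dotProduct, dotProduct_smul, smul_eq_mul, smul_eq_mul]
  ring

lemma IsChiralFrame.gadgetSum_eq (h : IsChiralFrame L κ U) (h' : IsChiralFrame L' κ' U')
    (hL : GardenRel L) (hL' : GardenRel L') :
    gadgetSum L L' = -4 * (1 + κ * κ') * (1 + (U * U'ᵀ).det) * trace (U * U'ᵀ) := by
  have hG : U * U'ᵀ ∈ orthogonalGroup (Fin 3) ℤ :=
    mul_mem h.mem_orthogonalGroup (transpose_mem_orthogonalGroup h'.mem_orthogonalGroup)
  have hinner (m n : Fin 3) : (if m.succ ≠ n.succ then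
      trace ((L m.succ)ᵀ * L n.succ * (L' m.succ)ᵀ * L' n.succ) else 0) =
      -2 * (1 + κ * κ') * ((U m ⨯₃ U n) ⬝ᵥ (U' m ⨯₃ U' n)) := by
    by_cases hmn : m = n
    · simp [hmn]
    · rw [if_pos (by simpa using hmn), h.trace_succ_succ h' hL hL' hmn]
  have hdiag : ∑ n, U n ⬝ᵥ U' n = trace (U * U'ᵀ) := rfl
  have hcross : ∑ m, ∑ n, (U m ⨯₃ U n) ⬝ᵥ (U' m ⨯₃ U' n) =
      2 * ((U * U'ᵀ).det * trace (U * U'ᵀ)) := by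
    rw [sum_cross_dotProduct_cross, adjugate_eq_of_mem_orthogonalGroup hG, trace_smul,
      trace_transpose, smul_eq_mul]
  rw [gadgetSum, Fin.sum_univ_succ]
  simp only [Fin.sum_univ_succ (n := 3), hinner, trace_transpose_mul_mul_swap (L 0) _ (L' 0),
    h.trace_zero_succ h', ne_eq, not_true_eq_false, if_false, Fin.succ_ne_zero,
    (Fin.succ_ne_zero _).symm, not_false_eq_true, if_true, zero_add, Finset.sum_add_distrib,
    ← Finset.mul_sum, hdiag, hcross]
  ring

end Frame

theorem stmt14 (L L' : Fin 4 → Matrix (Fin 4) (Fin 4) ℤ)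
    (hL : IsAdinkra L) (hL' : IsAdinkra L') :
    gadgetSum L L' ∈ ({0, 16, -16, -48} : Set ℤ) := by
  obtain ⟨κ, U, h⟩ := hL.2.exists_isChiralFrame
  obtain ⟨κ', U', h'⟩ := hL'.2.exists_isChiralFrame
  rw [h.gadgetSum_eq h' hL.2 hL'.2]
  have hκ : κ * κ' * (κ * κ') = 1 := by rw [mul_mul_mul_comm, h.mul_self, h'.mul_self, one_mul]
  have hG : U * U'ᵀ ∈ orthogonalGroup (Fin 3) ℤ :=
    mul_mem h.mem_orthogonalGroup (transpose_mem_orthogonalGroup h'.mem_orthogonalGroup)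
  rcases mul_self_eq_one_iff.mp hκ with hκ | hκ
  · rcases mul_self_eq_one_iff.mp (det_mul_self_of_mem_orthogonalGroup hG) with hdet | hdet
    · rcases trace_mem_of_mem_specialOrthogonalGroup
        (mem_specialOrthogonalGroup_iff.mpr ⟨hG, hdet⟩) with ht | ht | ht | (ht : _ = (3 : ℤ)) <;>
        norm_num [hκ, hdet, ht]
    · simp [hdet]
  · simp [hκ]
end
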